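/- arXiv:1809.08031 — 3 statements merged into one kernel-verified Lean document; each statement's English description precedes it below -/
import Mathlib

section
/- Fix M ∈ ℕ, a feature vector w : Fin M → ℝ, an observation a > 0, and α : Fin M → ℝ. For β : Fin M → ℝ write ⟨β,w⟩ = ∑ m, β m · w m. Then the function G : (Fin M → ℝ) → ℝ defined by G(β) = Real.log (ProbabilityTheory.gammaPDFReal (Real.exp ⟨α,w⟩) (Real.exp (−⟨β,w⟩)) a) is differentiable at every β, and its m-th partial derivative at β equals w m · (a · Real.exp (−⟨β,w⟩) − Real.exp ⟨α,w⟩). -/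
open Finset

/-- The log gamma density with shape `exp⟨α,w⟩` and rate `exp(−⟨β,w⟩)` (i.e. scale
`exp⟨β,w⟩`), as a function of the scale regression weights `β`, is differentiable
everywhere, and its `m`-th partial derivative at `β` equals
`w m · (a · exp(−⟨β,w⟩) − exp⟨α,w⟩)`. -/
theorem gamma_loglik_partial_deriv_beta
    (M : ℕ) (w : Fin M → ℝ) (a : ℝ) (ha : 0 < a) (α : Fin M → ℝ) :
    ∀ β : Fin M → ℝ,
      DifferentiableAt ℝ (fun β : Fin M → ℝ =>
          Real.log (ProbabilityTheory.gammaPDFReal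
            (Real.exp (∑ m, α m * w m)) (Real.exp (-(∑ m, β m * w m))) a)) β ∧
      ∀ m : Fin M,
        fderiv ℝ (fun β : Fin M → ℝ =>
            Real.log (ProbabilityTheory.gammaPDFReal
              (Real.exp (∑ m, α m * w m)) (Real.exp (-(∑ m, β m * w m))) a)) β
          (Pi.single m 1) =
        w m * (a * Real.exp (-(∑ m, β m * w m)) - Real.exp (∑ m, α m * w m)) := by
  intro β
  have hfun : (fun β : Fin M → ℝ =>
          Real.log (ProbabilityTheory.gammaPDFReal
            (Real.exp (∑ m, α m * w m)) (Real.exp (-(∑ m, β m * w m))) a)) =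
      fun β : Fin M → ℝ => (Real.exp (∑ m, α m * w m) * (-(∑ m, β m * w m))
        - Real.exp (-(∑ m, β m * w m)) * a)
        + (Real.log (a ^ (Real.exp (∑ m, α m * w m) - 1))
          - Real.log (Real.Gamma (Real.exp (∑ m, α m * w m)))) := by
    funext β
    generalize (∑ m, α m * w m) = s
    generalize (∑ m, β m * w m) = t
    have hk : 0 < Real.exp s := Real.exp_pos s
    have hG := Real.Gamma_pos_of_pos hk
    have h1 : 0 < Real.exp (-t) ^ Real.exp s := Real.rpow_pos_of_pos (Real.exp_pos _) _
    have h2 : 0 < a ^ (Real.exp s - 1) := Real.rpow_pos_of_pos ha _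
    rw [ProbabilityTheory.gammaPDFReal, if_pos ha.le,
      Real.log_mul (mul_pos (div_pos h1 hG) h2).ne' (Real.exp_pos _).ne',
      Real.log_mul (div_pos h1 hG).ne' h2.ne', Real.log_div h1.ne' hG.ne',
      Real.log_rpow (Real.exp_pos _), Real.log_exp, Real.log_exp]
    ring
  have hL : HasFDerivAt (fun β : Fin M → ℝ => ∑ m, β m * w m)
      (∑ m, w m • (ContinuousLinearMap.proj m : (Fin M → ℝ) →L[ℝ] ℝ)) β := by
    refine HasFDerivAt.fun_sum fun i _ => ?_
    exact (hasFDerivAt_apply (𝕜 := ℝ) i β).mul_const (w i)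
  rw [hfun]
  have hD := ((hL.neg.const_mul (Real.exp (∑ m, α m * w m))).sub
    (hL.neg.exp.mul_const a)).add_const
      (Real.log (a ^ (Real.exp (∑ m, α m * w m) - 1))
          - Real.log (Real.Gamma (Real.exp (∑ m, α m * w m))))
  refine ⟨hD.differentiableAt, fun m => ?_⟩
  have hs : (∑ i, w i • (ContinuousLinearMap.proj i : (Fin M → ℝ) →L[ℝ] ℝ)) (Pi.single m 1)
      = w m := by
    simp [ContinuousLinearMap.sum_apply, Pi.single_apply]
  refine (congrArg (fun L : (Fin M → ℝ) →L[ℝ] ℝ => L (Pi.single m 1)) hD.fderiv).trans ?_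
  simp only [ContinuousLinearMap.sub_apply, ContinuousLinearMap.smul_apply,
    ContinuousLinearMap.neg_apply, hs, smul_eq_mul, Pi.neg_apply]
  ring
end

section
/- (Proposition 1, α-block.) Fix M, K ∈ ℕ, observations a : Fin K → ℝ with a k > 0 for all k, feature vectors W : Fin K → (Fin M → ℝ), and β : Fin M → ℝ. For v, w : Fin M → ℝ write ⟨v,w⟩ = ∑ m, v m · w m. Then the log-likelihood L(α) = ∑ k, Real.log (ProbabilityTheory.gammaPDFReal (Real.exp ⟨α, W k⟩) (Real.exp (−⟨β, W k⟩)) (a k)) is differentiable at every α : Fin M → ℝ, and its m-th partial derivative at α equals ∑ k, (W k) m · Real.exp ⟨α, W k⟩ · (Real.log (a k) − ψ(Real.exp ⟨α, W k⟩) − ⟨β, W k⟩), where ψ(y) = deriv (fun z => Real.log (Real.Gamma z)) y. In matrix notation this gradient is Wᵀ( exp(Wα) ⊙ ( ln(a) − ψ(exp(Wα)) − Wβ ) ), where ⊙ is the Hadamard product. -/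
open Finset

lemma log_gammaPDF_aux {s b x : ℝ} (hs : 0 < s) (hx : 0 < x) :
    Real.log (ProbabilityTheory.gammaPDFReal s (Real.exp (-b)) x) =
      s * (Real.log x - b) - Real.log (Real.Gamma s) - (Real.log x + Real.exp (-b) * x) := by
  have hG := Real.Gamma_pos_of_pos hs
  have h1 : 0 < Real.exp (-b) ^ s := Real.rpow_pos_of_pos (Real.exp_pos _) _
  have h2 : 0 < x ^ (s - 1) := Real.rpow_pos_of_pos hx _
  rw [ProbabilityTheory.gammaPDFReal, if_pos hx.le,
    Real.log_mul (by positivity) (Real.exp_pos _).ne', Real.log_mul (by positivity) h2.ne',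
    Real.log_div h1.ne' hG.ne', Real.log_rpow (Real.exp_pos _), Real.log_rpow hx,
    Real.log_exp, Real.log_exp]
  ring

lemma logGamma_hasDerivAt_aux {s : ℝ} (hs : 0 < s) :
    HasDerivAt (fun z : ℝ => Real.log (Real.Gamma z))
      (deriv (fun z : ℝ => Real.log (Real.Gamma z)) s) s := by
  refine ((Real.differentiableAt_Gamma fun m => ?_).log
    (Real.Gamma_pos_of_pos hs).ne').hasDerivAt
  have : (0 : ℝ) ≤ m := Nat.cast_nonneg m
  linarith

lemma scalar_hasDerivAt_aux (b x t : ℝ) (hx : 0 < x) :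
    HasDerivAt (fun t : ℝ =>
        Real.log (ProbabilityTheory.gammaPDFReal (Real.exp t) (Real.exp (-b)) x))
      (Real.exp t * (Real.log x -
        deriv (fun z : ℝ => Real.log (Real.Gamma z)) (Real.exp t) - b)) t := by
  have he := Real.hasDerivAt_exp t
  have hG := (logGamma_hasDerivAt_aux (Real.exp_pos t)).comp t he
  have h := ((he.mul_const (Real.log x - b)).sub hG).sub_const
    (Real.log x + Real.exp (-b) * x)
  have e : (fun t : ℝ =>
      Real.log (ProbabilityTheory.gammaPDFReal (Real.exp t) (Real.exp (-b)) x)) =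
      fun t => Real.exp t * (Real.log x - b) - Real.log (Real.Gamma (Real.exp t)) -
        (Real.log x + Real.exp (-b) * x) :=
    funext fun t => log_gammaPDF_aux (Real.exp_pos t) hx
  rw [e]
  refine h.congr_deriv ?_
  ring

/-- Proposition 1, α-block: the amplitude log-likelihood
`L(α) = ∑ k, log (gammaPDFReal (exp⟨α, W k⟩) (exp(−⟨β, W k⟩)) (a k))`
is differentiable at every `α`, and its `m`-th partial derivative at `α` equals
`∑ k, (W k) m · exp⟨α, W k⟩ · (log (a k) − ψ(exp⟨α, W k⟩) − ⟨β, W k⟩)`, i.e. in matrix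
notation `Wᵀ(exp(Wα) ⊙ (ln a − ψ(exp(Wα)) − Wβ))`. -/
theorem gamma_loglik_gradient_alpha_block
    (M K : ℕ) (a : Fin K → ℝ) (ha : ∀ k, 0 < a k)
    (W : Fin K → Fin M → ℝ) (β : Fin M → ℝ) :
    ∀ α : Fin M → ℝ,
      DifferentiableAt ℝ (fun α : Fin M → ℝ =>
          ∑ k, Real.log (ProbabilityTheory.gammaPDFReal
            (Real.exp (∑ m, α m * W k m)) (Real.exp (-(∑ m, β m * W k m))) (a k))) α ∧
      ∀ m : Fin M,
        fderiv ℝ (fun α : Fin M → ℝ =>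
            ∑ k, Real.log (ProbabilityTheory.gammaPDFReal
              (Real.exp (∑ m, α m * W k m)) (Real.exp (-(∑ m, β m * W k m))) (a k))) α
          (Pi.single m 1) =
        ∑ k, W k m * Real.exp (∑ m, α m * W k m) *
          (Real.log (a k) -
            deriv (fun z : ℝ => Real.log (Real.Gamma z)) (Real.exp (∑ m, α m * W k m)) -
            ∑ m, β m * W k m) := by
  intro α
  have hlin : ∀ k, HasFDerivAt (fun α : Fin M → ℝ => ∑ m, α m * W k m)
      (∑ m, W k m • (ContinuousLinearMap.proj m : (Fin M → ℝ) →L[ℝ] ℝ)) α := fun k =>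
    HasFDerivAt.fun_sum fun m _ => (hasFDerivAt_apply m α).mul_const (W k m)
  have H := HasFDerivAt.fun_sum (u := Finset.univ) fun k _ =>
    (scalar_hasDerivAt_aux (∑ m, β m * W k m) (a k) (∑ m, α m * W k m)
      (ha k)).comp_hasFDerivAt α (hlin k)
  refine ⟨H.differentiableAt, fun m => ?_⟩
  refine (congrArg (fun f => f (Pi.single m 1)) H.fderiv).trans ?_
  simp only [ContinuousLinearMap.sum_apply, ContinuousLinearMap.smul_apply,
    ContinuousLinearMap.proj_apply, smul_eq_mul]
  refine Finset.sum_congr rfl fun k _ => ?_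
  have : ∑ i, W k i * (Pi.single m 1 : Fin M → ℝ) i = W k m := by
    simp [Pi.single_apply]
  rw [this]
  ring
end

section
/- (Proposition 1, joint amplitude block.) Fix M, K ∈ ℕ, observations a : Fin K → ℝ with a k > 0 for all k, and feature vectors W : Fin K → (Fin M → ℝ). For v, w : Fin M → ℝ write ⟨v,w⟩ = ∑ m, v m · w m. Define L : (Fin M → ℝ) × (Fin M → ℝ) → ℝ by L(α, β) = ∑ k, Real.log (ProbabilityTheory.gammaPDFReal (Real.exp ⟨α, W k⟩) (Real.exp (−⟨β, W k⟩)) (a k)). Then L is differentiable at every (α, β), and its Fréchet derivative at (α, β) maps a direction (h, h') : (Fin M → ℝ) × (Fin M → ℝ) to ∑ m, g_α(m) · h m + ∑ m, g_β(m) · h' m, where g_α(m) = ∑ k, (W k) m · Real.exp ⟨α, W k⟩ · (Real.log (a k) − ψ(Real.exp ⟨α, W k⟩) − ⟨β, W k⟩) and g_β(m) = ∑ k, (W k) m · ( a k · Real.exp (−⟨β, W k⟩) − Real.exp ⟨α, W k⟩ ), with ψ(y) = deriv (fun z => Real.log (Real.Gamma z)) y. -/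
open Finset

lemma log_gammaPDFReal_aux (A B x : ℝ) (hx : 0 < x) :
    Real.log (ProbabilityTheory.gammaPDFReal (Real.exp A) (Real.exp (-B)) x) =
      Real.exp A * (-B) - Real.log (Real.Gamma (Real.exp A)) + (Real.exp A - 1) * Real.log x
        - Real.exp (-B) * x := by
  have hG : 0 < Real.Gamma (Real.exp A) := Real.Gamma_pos_of_pos (Real.exp_pos A)
  have h1 : 0 < Real.exp (-B) ^ Real.exp A := Real.rpow_pos_of_pos (Real.exp_pos _) _
  have h2 : 0 < x ^ (Real.exp A - 1) := Real.rpow_pos_of_pos hx _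
  rw [ProbabilityTheory.gammaPDFReal, if_pos hx.le,
    Real.log_mul (mul_pos (div_pos h1 hG) h2).ne' (Real.exp_pos _).ne',
    Real.log_mul (div_pos h1 hG).ne' h2.ne', Real.log_div h1.ne' hG.ne',
    Real.log_rpow (Real.exp_pos _), Real.log_rpow hx, Real.log_exp, Real.log_exp]
  ring

lemma hasFDerivAt_dot_aux {M : ℕ} (w : Fin M → ℝ) (p : Fin M → ℝ) :
    HasFDerivAt (fun q : Fin M → ℝ => ∑ m, q m * w m)
      (∑ m, w m • (ContinuousLinearMap.proj m : (Fin M → ℝ) →L[ℝ] ℝ)) p := by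
  apply HasFDerivAt.fun_sum
  intro m _
  exact (hasFDerivAt_apply m p).mul_const (w m)

lemma hasFDerivAt_term_aux {M : ℕ} (w : Fin M → ℝ) (x : ℝ) (hx : 0 < x) (α β : Fin M → ℝ) :
    ∃ D : ((Fin M → ℝ) × (Fin M → ℝ)) →L[ℝ] ℝ,
      HasFDerivAt (fun p : (Fin M → ℝ) × (Fin M → ℝ) =>
        Real.log (ProbabilityTheory.gammaPDFReal
            (Real.exp (∑ m, p.1 m * w m)) (Real.exp (-(∑ m, p.2 m * w m))) x)) D (α, β) ∧
      ∀ h h' : Fin M → ℝ, D (h, h') =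
        Real.exp (∑ m, α m * w m) * (Real.log x -
          deriv (fun z : ℝ => Real.log (Real.Gamma z)) (Real.exp (∑ m, α m * w m)) -
              ∑ m, β m * w m) * (∑ m, w m * h m) +
        (x * Real.exp (-(∑ m, β m * w m)) - Real.exp (∑ m, α m * w m)) * (∑ m, w m * h' m) := by
  simp only [log_gammaPDFReal_aux _ _ x hx]
  have hA := (hasFDerivAt_dot_aux w α).comp (α, β) (hasFDerivAt_fst (𝕜 := ℝ) (p := (α, β)))
  have hB := (hasFDerivAt_dot_aux w β).comp (α, β) (hasFDerivAt_snd (𝕜 := ℝ) (p := (α, β)))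
  have hE := hA.exp
  have hd : DifferentiableAt ℝ (fun z : ℝ => Real.log (Real.Gamma z))
      (Real.exp (∑ m, α m * w m)) := by
    have hp := Real.exp_pos (∑ m, α m * w m)
    refine (Real.differentiableAt_Gamma fun m => ?_).log (Real.Gamma_pos_of_pos hp).ne'
    have : (0 : ℝ) ≤ m := m.cast_nonneg
    linarith
  have hG := hd.hasDerivAt.comp_hasFDerivAt (α, β) hE
  refine ⟨_, (((hE.mul hB.neg).sub hG).add ((hE.sub_const 1).mul_const (Real.log x))).sub
    (hB.neg.exp.mul_const x), fun h h' => ?_⟩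
  simp
  ring

/-- Proposition 1, joint amplitude block: the amplitude log-likelihood
`L(α, β) = ∑ k, log (gammaPDFReal (exp⟨α, W k⟩) (exp(−⟨β, W k⟩)) (a k))` is differentiable
at every `(α, β)`, and its Fréchet derivative maps a direction `(h, h')` to
`∑ m, gα m · h m + ∑ m, gβ m · h' m` with the α- and β-gradient blocks
`gα m = ∑ k, (W k) m · exp⟨α, W k⟩ · (log (a k) − ψ(exp⟨α, W k⟩) − ⟨β, W k⟩)` and
`gβ m = ∑ k, (W k) m · (a k · exp(−⟨β, W k⟩) − exp⟨α, W k⟩)`. -/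
theorem gamma_loglik_frechet_deriv_joint
    (M K : ℕ) (a : Fin K → ℝ) (ha : ∀ k, 0 < a k)
    (W : Fin K → Fin M → ℝ) :
    ∀ α β : Fin M → ℝ,
      DifferentiableAt ℝ (fun p : (Fin M → ℝ) × (Fin M → ℝ) =>
          ∑ k, Real.log (ProbabilityTheory.gammaPDFReal
            (Real.exp (∑ m, p.1 m * W k m)) (Real.exp (-(∑ m, p.2 m * W k m))) (a k)))
        (α, β) ∧
      ∀ h h' : Fin M → ℝ,
        fderiv ℝ (fun p : (Fin M → ℝ) × (Fin M → ℝ) =>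
            ∑ k, Real.log (ProbabilityTheory.gammaPDFReal
              (Real.exp (∑ m, p.1 m * W k m)) (Real.exp (-(∑ m, p.2 m * W k m))) (a k)))
          (α, β) (h, h') =
        (∑ m, (∑ k, W k m * Real.exp (∑ m, α m * W k m) *
            (Real.log (a k) -
              deriv (fun z : ℝ => Real.log (Real.Gamma z)) (Real.exp (∑ m, α m * W k m)) -
              ∑ m, β m * W k m)) * h m) +
        ∑ m, (∑ k, W k m *
            (a k * Real.exp (-(∑ m, β m * W k m)) - Real.exp (∑ m, α m * W k m))) * h' m := by
  intro α β
  choose D hD hD' using fun k => hasFDerivAt_term_aux (W k) (a k) (ha k) α β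
  have H := HasFDerivAt.fun_sum (u := Finset.univ) fun k _ => hD k
  refine ⟨H.differentiableAt, fun h h' => ?_⟩
  rw [H.fderiv]
  simp only [ContinuousLinearMap.sum_apply, hD', Finset.sum_add_distrib, Finset.sum_mul,
    Finset.mul_sum]
  congr 1
  · rw [Finset.sum_comm]
    refine Finset.sum_congr rfl fun m _ => Finset.sum_congr rfl fun k _ => ?_
    ring
  · rw [Finset.sum_comm]
    refine Finset.sum_congr rfl fun m _ => Finset.sum_congr rfl fun k _ => ?_
    ring
end
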